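/- Let V be a finite-dimensional real vector space, g a real Lie algebra, and k a natural number. For every alternating 1-linear map A from V to g and every alternating k-linear map u from V to g, the identity [[A ∧ A] ∧ u] = 2 • [A ∧ [A ∧ u]] holds as an equality of alternating (k+2)-linear maps from V to g, with index types identified along the canonical equivalences. -/

import Mathlib

/-!
The bracket-wedge of two antisymmetrizations `Alt a`, `Alt b` is the antisymmetrization of the
plain product `(v, w) ↦ ⁅a v, b w⁆` (`bwedge_alternatization`). Since `A = Alt A` and
`k! • u = Alt u`, after multiplication by `k!` both sides become antisymmetrizations of explicit
multilinear maps: `[[A ∧ A] ∧ u]` comes from `⁅⁅A x, A y⁆, u z⁆` and `[A ∧ [A ∧ u]]` from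
`⁅A x, ⁅A y, u z⁆⁆`. By the Jacobi identity the first map is the second minus its composition with
the transposition of `x` and `y`; a transposition has sign `-1`, so antisymmetrizing gives the
factor `2`. The factor `k!` is cancelled because `g` is a real vector space.
-/

open scoped TensorProduct

/-- The bilinear map `g -> g -> g` given by the Lie bracket. -/
noncomputable def bracketBilin (g : Type*) [LieRing g] [LieAlgebra ℝ g] :
    g →ₗ[ℝ] g →ₗ[ℝ] g :=
  LinearMap.mk₂ ℝ (fun ξ η : g => ⁅ξ, η⁆)
    (fun _ _ _ => add_lie _ _ _)
    (fun _ _ _ => smul_lie _ _ _)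
    (fun _ _ _ => lie_add _ _ _)
    (fun _ _ _ => lie_smul _ _ _)

/-- The bracket-wedge `[u ∧ v]` of Lie algebra-valued alternating forms, obtained by
composing the linear map induced by the Lie bracket with the domain coproduct
`u.domCoprod v`, reindexed from `Fin k ⊕ Fin l` to `Fin (k + l)` along the canonical
equivalence. -/
noncomputable def bwedge {V g : Type*} [AddCommGroup V] [Module ℝ V]
    [LieRing g] [LieAlgebra ℝ g] {k l : ℕ}
    (u : AlternatingMap ℝ V g (Fin k)) (v : AlternatingMap ℝ V g (Fin l)) :
    AlternatingMap ℝ V g (Fin (k + l)) :=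
  ((TensorProduct.lift (bracketBilin g)).compAlternatingMap
    (u.domCoprod v)).domDomCongr finSumFinEquiv

/-- The bracket product of multilinear maps before antisymmetrization:
`(v₁, …, v_{k+l}) ↦ ⁅a (v₁, …, v_k), b (v_{k+1}, …, v_{k+l})⁆`. -/
noncomputable def bracketProd {V g : Type*} [AddCommGroup V] [Module ℝ V]
    [LieRing g] [LieAlgebra ℝ g] {k l : ℕ}
    (a : MultilinearMap ℝ (fun _ : Fin k => V) g) (b : MultilinearMap ℝ (fun _ : Fin l => V) g) :
    MultilinearMap ℝ (fun _ : Fin (k + l) => V) g :=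
  ((TensorProduct.lift (bracketBilin g)).compMultilinearMap
    (a.domCoprod b)).domDomCongr finSumFinEquiv

section

variable {V g : Type*} [AddCommGroup V] [Module ℝ V] [LieRing g] [LieAlgebra ℝ g]

lemma bracketProd_apply {k l : ℕ} (a : MultilinearMap ℝ (fun _ : Fin k => V) g)
    (b : MultilinearMap ℝ (fun _ : Fin l => V) g) (v : Fin (k + l) → V) :
    bracketProd a b v = ⁅a fun i => v (Fin.castAdd l i), b fun j => v (Fin.natAdd k j)⁆ := by
  simp [bracketProd, bracketBilin]

lemma alternatization_domDomCongr {ι ι' : Type*} [Fintype ι] [Fintype ι'] [DecidableEq ι]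
    [DecidableEq ι'] (e : ι ≃ ι') (m : MultilinearMap ℝ (fun _ : ι => V) g) :
    (m.domDomCongr e).alternatization = m.alternatization.domDomCongr e := by
  ext v
  simp only [MultilinearMap.alternatization_apply, AlternatingMap.domDomCongr_apply,
    MultilinearMap.domDomCongr_apply]
  refine (Fintype.sum_equiv e.permCongr _ _ fun σ => ?_).symm
  simp [Equiv.Perm.sign_permCongr]

lemma alternatization_domDomCongr_perm {ι : Type*} [Fintype ι] [DecidableEq ι]
    (σ : Equiv.Perm ι) (m : MultilinearMap ℝ (fun _ : ι => V) g) :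
    (m.domDomCongr σ).alternatization = Equiv.Perm.sign σ • m.alternatization := by
  rw [alternatization_domDomCongr, AlternatingMap.domDomCongr_perm]

/-- The bracket-wedge of two antisymmetrizations is the antisymmetrization of the unsymmetrized
product. -/
lemma bwedge_alternatization {k l : ℕ} (a : MultilinearMap ℝ (fun _ : Fin k => V) g)
    (b : MultilinearMap ℝ (fun _ : Fin l => V) g) :
    bwedge a.alternatization b.alternatization = (bracketProd a b).alternatization := by
  rw [bwedge, bracketProd, alternatization_domDomCongr,
    LinearMap.compMultilinearMap_alternatization, MultilinearMap.domCoprod_alternization]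

lemma bwedge_nsmul_right {k l : ℕ} (n : ℕ) (a : AlternatingMap ℝ V g (Fin k))
    (b : AlternatingMap ℝ V g (Fin l)) : bwedge a (n • b) = n • bwedge a b := by
  have h : a.domCoprod (n • b) = n • a.domCoprod b := by
    simp only [← AlternatingMap.domCoprod'_apply, TensorProduct.tmul_smul, map_nsmul]
  ext v
  simp [bwedge, h]

/-- A `1`-linear map is its own antisymmetrization. -/
lemma alternatization_one (A : AlternatingMap ℝ V g (Fin 1)) :
    (A : MultilinearMap ℝ (fun _ : Fin 1 => V) g).alternatization = A := by
  simp [AlternatingMap.coe_alternatization]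

/-- The Jacobi identity `⁅⁅x, y⁆, z⁆ = ⁅x, ⁅y, z⁆⁆ - ⁅y, ⁅x, z⁆⁆` at the level of unsymmetrized
products. -/
lemma bracketProd_jacobi {k : ℕ} (A : MultilinearMap ℝ (fun _ : Fin 1 => V) g)
    (u : MultilinearMap ℝ (fun _ : Fin k => V) g)
    (h₁ : 1 + 1 + k = k + 2) (h₂ : 1 + (1 + k) = k + 2) :
    (bracketProd (bracketProd A A) u).domDomCongr (finCongr h₁) =
      (bracketProd A (bracketProd A u)).domDomCongr (finCongr h₂) -
        ((bracketProd A (bracketProd A u)).domDomCongr (finCongr h₂)).domDomCongr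
          (Equiv.swap 0 1) := by
  ext v
  -- Positions `0` and `1` carry the two arguments of `A`, the remaining ones those of `u`; the
  -- transposition `(0 1)` fixes the latter.
  have e : ∀ (j : Fin k), Equiv.swap (0 : Fin (k + 2)) 1 (Fin.cast h₂
      (Fin.natAdd 1 (Fin.natAdd 1 j))) = Fin.cast h₁ (Fin.natAdd (1 + 1) j) := by
    intro j
    rw [Equiv.swap_apply_of_ne_of_ne] <;> simp [Fin.ext_iff] <;> omega
  have e' : ∀ (j : Fin k), (Fin.cast h₂
      (Fin.natAdd 1 (Fin.natAdd 1 j)) : Fin (k + 2)) =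
      Fin.cast h₁ (Fin.natAdd (1 + 1) j) := by
    intro j
    simp [Fin.ext_iff]; omega
  have e0 : ∀ i : Fin 1, (Fin.cast h₂ (Fin.castAdd (1 + k) i) : Fin (k + 2)) = 0 := by
    intro i; simp [Fin.ext_iff]
  have e1 : ∀ i : Fin 1, (Fin.cast h₂ (Fin.natAdd 1 (Fin.castAdd k i)) : Fin (k + 2))
      = 1 := by
    intro i; simp [Fin.ext_iff]
  have f0 : ∀ i : Fin 1, (Fin.cast h₁ (Fin.castAdd k (Fin.castAdd 1 i)) : Fin (k + 2))
      = 0 := by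
    intro i; simp [Fin.ext_iff]
  have f1 : ∀ i : Fin 1, (Fin.cast h₁ (Fin.castAdd k (Fin.natAdd 1 i)) : Fin (k + 2))
      = 1 := by
    intro i; simp [Fin.ext_iff]
  have h := lie_lie (A fun _ => v 0) (A fun _ => v 1)
    (u fun j => v (Fin.cast h₁ (Fin.natAdd (1 + 1) j)))
  simp only [sub_apply, MultilinearMap.domDomCongr_apply, bracketProd_apply]
  convert h using 7
  · exact f0 _
  · exact f1 _
  · rfl
  · exact e0 _
  · exact e1 _
  · exact e' _
  · exact (congrArg _ (e0 _)).trans (Equiv.swap_apply_left _ _)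
  · exact (congrArg _ (e1 _)).trans (Equiv.swap_apply_right _ _)
  · exact e _

end

/-- The identity `[[A ∧ A] ∧ u] = 2 • [A ∧ [A ∧ u]]` for a `g`-valued 1-form `A`
and `g`-valued `k`-form `u`, with index types identified with `Fin (k + 2)` along
the canonical equivalences. This underlies `d_A (d_A u) = [F_A ∧ u]`. -/
theorem bwedge_sq_bracket {V g : Type*} [AddCommGroup V] [Module ℝ V]
    [FiniteDimensional ℝ V] [LieRing g] [LieAlgebra ℝ g] {k : ℕ}
    (A : AlternatingMap ℝ V g (Fin 1)) (u : AlternatingMap ℝ V g (Fin k)) :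
    (bwedge (bwedge A A) u).domDomCongr
        (finCongr (by omega : 1 + 1 + k = k + 2)) =
      2 • ((bwedge A (bwedge A u)).domDomCongr
        (finCongr (by omega : 1 + (1 + k) = k + 2))) := by
  -- Multiplication by `k!` replaces `u` by the antisymmetrization of `u`.
  have hu : (u : MultilinearMap ℝ (fun _ : Fin k => V) g).alternatization = k.factorial • u := by
    simp [AlternatingMap.coe_alternatization]
  have hk : (k.factorial : ℕ) ≠ 0 := k.factorial_ne_zero
  set A' : MultilinearMap ℝ (fun _ : Fin 1 => V) g := A.toMultilinearMap
  set u' : MultilinearMap ℝ (fun _ : Fin k => V) g := u.toMultilinearMap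
  have hA : A'.alternatization = A := alternatization_one A
  have hL : k.factorial • bwedge (bwedge A A) u =
      (bracketProd (bracketProd A' A') u').alternatization := by
    rw [← bwedge_alternatization, ← bwedge_alternatization, hA, hu, bwedge_nsmul_right]
  have hR : k.factorial • bwedge A (bwedge A u) =
      (bracketProd A' (bracketProd A' u')).alternatization := by
    rw [← bwedge_alternatization, ← bwedge_alternatization, hA, hu, bwedge_nsmul_right,
      bwedge_nsmul_right]
  have hs : Equiv.Perm.sign (Equiv.swap (0 : Fin (k + 2)) 1) = -1 :=
    Equiv.Perm.sign_swap (by simp)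
  have key : ((bracketProd (bracketProd A' A') u').domDomCongr
      (finCongr (by omega : 1 + 1 + k = k + 2))).alternatization =
      2 • ((bracketProd A' (bracketProd A' u')).domDomCongr
        (finCongr (by omega : 1 + (1 + k) = k + 2))).alternatization := by
    rw [bracketProd_jacobi, map_sub, alternatization_domDomCongr_perm, hs, Units.neg_smul, one_smul,
      two_smul, sub_neg_eq_add]
  rw [alternatization_domDomCongr, alternatization_domDomCongr, ← hL, ← hR] at key
  ext v
  have hv := DFunLike.congr_fun key v
  simp only [AlternatingMap.domDomCongr_apply, AlternatingMap.smul_apply] at hv ⊢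
  rw [smul_comm] at hv
  rw [← Nat.cast_smul_eq_nsmul ℝ, ← Nat.cast_smul_eq_nsmul ℝ k.factorial] at hv
  exact smul_right_injective g (Nat.cast_ne_zero.mpr hk) hv
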